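/- arXiv:1507.08988 — 11 statements merged into one kernel-verified Lean document; each statement's English description precedes it below -/
import Mathlib

section
/- For every solution of the backward Ricci flow system of class U1[Z,Z̄,1], the identity d/dt(A−B) = (A−B)(A+B)²/(ABD) holds on [0,T); consequently, if λ₁ = λ₂ then A(t) = B(t) for all t ∈ [0,T), and if λ₁ > λ₂ then A(t) > B(t) for all t ∈ [0,T). -/
open Real Set ENNReal

/-- The time domain `[0, T)` where `T ∈ (0, ∞]` is an extended nonnegative real. -/
def flowDomain (T : ℝ≥0∞) : Set ℝ := {t : ℝ | 0 ≤ t ∧ ENNReal.ofReal t < T}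

lemma aux_pos (τ : ℝ) (hτ : 0 ≤ τ) (f g : ℝ → ℝ)
    (hg0 : ∀ t ∈ Icc 0 τ, 0 ≤ g t) (hg : ContinuousOn g (Icc 0 τ))
    (hf : ∀ t ∈ Icc 0 τ, HasDerivWithinAt f (g t * f t) (Icc 0 τ) t) :
    (f 0 = 0 → f τ = 0) ∧ (0 < f 0 → 0 < f τ) := by
  have hfc : ContinuousOn f (Icc 0 τ) := fun t ht => (hf t ht).continuousWithinAt
  have h0 : (0 : ℝ) ∈ Icc 0 τ := ⟨le_refl _, hτ⟩
  have h1 : τ ∈ Icc 0 τ := ⟨hτ, le_refl _⟩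
  constructor
  · intro hf0
    obtain ⟨M, hM⟩ := isCompact_Icc.exists_bound_of_continuousOn hg
    have hd : ∀ t ∈ Icc 0 τ, HasDerivWithinAt (fun t => f t ^ 2 * Real.exp (-(2 * M) * t))
        (2 * (f t) ^ 2 * (g t - M) * Real.exp (-(2 * M) * t)) (Icc 0 τ) t := by
      intro t ht
      have h2 := ((hasDerivAt_id t).const_mul (-(2 * M))).exp.hasDerivWithinAt (s := Icc 0 τ)
      have h3 := ((hf t ht).pow 2).mul h2
      refine h3.congr_deriv ?_
      simp
      ring
    have hanti : AntitoneOn (fun t => f t ^ 2 * Real.exp (-(2 * M) * t)) (Icc 0 τ) := by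
      refine antitoneOn_of_hasDerivWithinAt_nonpos (convex_Icc 0 τ)
        (fun t ht => (hd t ht).continuousWithinAt)
        (fun t ht => (hd t (interior_subset ht)).mono interior_subset) ?_
      intro t ht
      have h4 := (le_abs_self _).trans (hM t (interior_subset ht))
      have h5 : 0 ≤ 2 * f t ^ 2 * (M - g t) * Real.exp (-(2 * M) * t) :=
        mul_nonneg (mul_nonneg (by positivity) (by linarith)) (Real.exp_pos _).le
      linarith
    have h6 := hanti h0 h1 hτ
    simp only [hf0] at h6
    have h7 := Real.exp_pos (-(2 * M) * τ)
    have h8 : f τ ^ 2 ≤ 0 := by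
      by_contra hc
      push Not at hc
      have := mul_pos hc h7
      norm_num at h6
      norm_num at this
      linarith
    exact pow_eq_zero_iff (two_ne_zero) |>.1 (le_antisymm h8 (sq_nonneg _))
  · intro hf0
    have hmono : MonotoneOn (fun t => f t ^ 2) (Icc 0 τ) := by
      refine monotoneOn_of_hasDerivWithinAt_nonneg (convex_Icc 0 τ) (hfc.pow 2)
        (fun t ht => ((hf t (interior_subset ht)).pow 2).mono interior_subset) ?_
      intro t ht
      have h4 := mul_nonneg (hg0 t (interior_subset ht)) (sq_nonneg (f t))
      norm_num
      nlinarith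
    by_contra hc
    push Not at hc
    obtain ⟨s, hs, hs0⟩ := intermediate_value_Icc' hτ hfc ⟨hc, hf0.le⟩
    have h9 := hmono h0 hs hs.1
    simp only [hs0] at h9
    nlinarith

/-- For every solution of the backward Ricci flow system of class `U1[Z,Z̄,1]`, the identity
`d/dt(A−B) = (A−B)(A+B)²/(ABD)` holds on `[0,T)`; consequently, if `λ₁ = λ₂` then `A = B`
on `[0,T)`, and if `λ₁ > λ₂` then `A > B` on `[0,T)`. -/
theorem stmt1 (k : ℝ) (T : ℝ≥0∞) (hT : 0 < T)
    (lam1 lam2 lam3 lam4 : ℝ)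
    (hlam1 : 0 < lam1) (hlam2 : 0 < lam2) (hlam3 : 0 < lam3) (hlam4 : 0 < lam4)
    (A B C D : ℝ → ℝ)
    (hpos : ∀ t ∈ flowDomain T, 0 < A t ∧ 0 < B t ∧ 0 < C t ∧ 0 < D t)
    (hA : ∀ t ∈ flowDomain T,
      HasDerivWithinAt A ((A t ^ 2 - B t ^ 2) / (B t * D t)) (flowDomain T) t)
    (hB : ∀ t ∈ flowDomain T,
      HasDerivWithinAt B ((B t ^ 2 - A t ^ 2) / (A t * D t)) (flowDomain T) t)
    (hC : ∀ t ∈ flowDomain T,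
      HasDerivWithinAt C 0 (flowDomain T) t)
    (hD : ∀ t ∈ flowDomain T,
      HasDerivWithinAt D (-(((A t - B t) ^ 2 + 12 * k ^ 2 * (A t * B t)) / (A t * B t)))
        (flowDomain T) t)
    (hA0 : A 0 = lam1) (hB0 : B 0 = lam2) (hC0 : C 0 = lam3) (hD0 : D 0 = lam4) :
    (∀ t ∈ flowDomain T,
      HasDerivWithinAt (fun s => A s - B s)
        ((A t - B t) * (A t + B t) ^ 2 / (A t * B t * D t)) (flowDomain T) t) ∧
    (lam1 = lam2 → ∀ t ∈ flowDomain T, A t = B t) ∧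
    (lam1 > lam2 → ∀ t ∈ flowDomain T, A t > B t) := by
  have hder : ∀ t ∈ flowDomain T,
      HasDerivWithinAt (fun s => A s - B s)
        ((A t - B t) * (A t + B t) ^ 2 / (A t * B t * D t)) (flowDomain T) t := by
    intro t ht
    obtain ⟨ha, hb, -, hd⟩ := hpos t ht
    refine ((hA t ht).sub (hB t ht)).congr_deriv ?_
    field_simp
    ring
  have key : ∀ t ∈ flowDomain T,
      (A 0 - B 0 = 0 → A t - B t = 0) ∧ (0 < A 0 - B 0 → 0 < A t - B t) := by
    intro t ht
    have hsub : Icc 0 t ⊆ flowDomain T := fun s hs =>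
      ⟨hs.1, (ENNReal.ofReal_le_ofReal hs.2).trans_lt ht.2⟩
    have cA : ContinuousOn A (Icc 0 t) := fun s hs =>
      ((hA s (hsub hs)).mono hsub).continuousWithinAt
    have cB : ContinuousOn B (Icc 0 t) := fun s hs =>
      ((hB s (hsub hs)).mono hsub).continuousWithinAt
    have cD : ContinuousOn D (Icc 0 t) := fun s hs =>
      ((hD s (hsub hs)).mono hsub).continuousWithinAt
    refine aux_pos t ht.1 (fun s => A s - B s)
      (fun s => (A s + B s) ^ 2 / (A s * B s * D s)) ?_ ?_ ?_
    · intro s hs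
      obtain ⟨ha, hb, -, hd⟩ := hpos s (hsub hs)
      positivity
    · refine ((cA.add cB).pow 2).div ((cA.mul cB).mul cD) ?_
      intro s hs
      obtain ⟨ha, hb, -, hd⟩ := hpos s (hsub hs)
      positivity
    · intro s hs
      refine ((hder s (hsub hs)).mono hsub).congr_deriv ?_
      ring
  refine ⟨hder, fun h t ht => ?_, fun h t ht => ?_⟩
  · have := (key t ht).1 (by rw [hA0, hB0, h, sub_self])
    linarith
  · have := (key t ht).2 (by rw [hA0, hB0]; linarith)
    linarith
end

section
/- For every solution of the backward Ricci flow system of class U1[Z,Z̄,1] with λ₁ > λ₂, one has A(t)² > λ₁λ₂ for all t ∈ [0,T), and D(t) = Λ · (√(λ₁λ₂) A(t)/(A(t)² + λ₁λ₂)) · ((A(t)² + λ₁λ₂)/(A(t)² − λ₁λ₂))^{3k²} for all t ∈ [0,T), where Λ = λ₄ · ((λ₁+λ₂)/√(λ₁λ₂)) · ((λ₁−λ₂)/(λ₁+λ₂))^{3k²}. -/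
open Real Set ENNReal

/-- For every solution of the backward Ricci flow system of class `U1[Z,Z̄,1]` with `λ₁ > λ₂`,
one has `A(t)² > λ₁λ₂` on `[0,T)` and
`D(t) = Λ · (√(λ₁λ₂) A/(A² + λ₁λ₂)) · ((A² + λ₁λ₂)/(A² − λ₁λ₂))^{3k²}` where
`Λ = λ₄ · ((λ₁+λ₂)/√(λ₁λ₂)) · ((λ₁−λ₂)/(λ₁+λ₂))^{3k²}`. -/
theorem stmt2 (k : ℝ) (T : ℝ≥0∞) (hT : 0 < T)
    (lam1 lam2 lam3 lam4 : ℝ)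
    (hlam1 : 0 < lam1) (hlam2 : 0 < lam2) (hlam3 : 0 < lam3) (hlam4 : 0 < lam4)
    (hlt : lam2 < lam1)
    (A B C D : ℝ → ℝ)
    (hpos : ∀ t ∈ flowDomain T, 0 < A t ∧ 0 < B t ∧ 0 < C t ∧ 0 < D t)
    (hA : ∀ t ∈ flowDomain T,
      HasDerivWithinAt A ((A t ^ 2 - B t ^ 2) / (B t * D t)) (flowDomain T) t)
    (hB : ∀ t ∈ flowDomain T,
      HasDerivWithinAt B ((B t ^ 2 - A t ^ 2) / (A t * D t)) (flowDomain T) t)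
    (hC : ∀ t ∈ flowDomain T,
      HasDerivWithinAt C 0 (flowDomain T) t)
    (hD : ∀ t ∈ flowDomain T,
      HasDerivWithinAt D (-(((A t - B t) ^ 2 + 12 * k ^ 2 * (A t * B t)) / (A t * B t)))
        (flowDomain T) t)
    (hA0 : A 0 = lam1) (hB0 : B 0 = lam2) (hC0 : C 0 = lam3) (hD0 : D 0 = lam4) :
    ∀ t ∈ flowDomain T,
      lam1 * lam2 < A t ^ 2 ∧
      D t = (lam4 * ((lam1 + lam2) / Real.sqrt (lam1 * lam2)) *
              ((lam1 - lam2) / (lam1 + lam2)) ^ (3 * k ^ 2)) *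
            (Real.sqrt (lam1 * lam2) * A t / (A t ^ 2 + lam1 * lam2)) *
            ((A t ^ 2 + lam1 * lam2) / (A t ^ 2 - lam1 * lam2)) ^ (3 * k ^ 2) := by
  have hconv : Convex ℝ (flowDomain T) := by
    apply Set.OrdConnected.convex
    refine ⟨fun x hx y hy z hz => ⟨le_trans hx.1 hz.1, lt_of_le_of_lt ?_ hy.2⟩⟩
    exact ENNReal.ofReal_le_ofReal hz.2
  have h0 : (0 : ℝ) ∈ flowDomain T := ⟨le_rfl, by simpa using hT⟩
  have hconst : ∀ f : ℝ → ℝ, (∀ t ∈ flowDomain T, HasDerivWithinAt f 0 (flowDomain T) t) →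
      ∀ t ∈ flowDomain T, f t = f 0 := by
    intro f hf t ht
    have := hconv.norm_image_sub_le_of_norm_hasDerivWithin_le (C := 0) hf
      (fun x _ => by simp) h0 ht
    simpa [sub_eq_zero] using this
  have hAB : ∀ t ∈ flowDomain T, A t * B t = lam1 * lam2 := by
    intro t ht
    have := hconst (fun t => A t * B t) ?_ t ht
    · simpa [hA0, hB0] using this
    · intro s hs
      obtain ⟨a, b, -, d⟩ := hpos s hs
      refine ((hA s hs).mul (hB s hs)).congr_deriv ?_
      field_simp
      ring
  have hmono : MonotoneOn (fun t => (A t - B t) ^ 2) (flowDomain T) := by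
    have hd : ∀ s ∈ flowDomain T, HasDerivWithinAt (fun t => (A t - B t) ^ 2)
        (2 * (A s - B s) ^ 2 * (A s + B s) ^ 2 / (A s * B s * D s)) (flowDomain T) s := by
      intro s hs
      obtain ⟨a, b, -, d⟩ := hpos s hs
      refine (((hA s hs).sub (hB s hs)).pow 2).congr_deriv ?_
      simp only [Pi.sub_apply]
      field_simp
      push_cast
      ring
    refine monotoneOn_of_hasDerivWithinAt_nonneg hconv
      (fun s hs => (hd s hs).continuousWithinAt)
      (fun s hs => (hd s (interior_subset hs)).mono interior_subset) ?_
    intro s hs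
    obtain ⟨a, b, -, d⟩ := hpos s (interior_subset hs)
    positivity
  have hne : ∀ t ∈ flowDomain T, A t - B t ≠ 0 := by
    intro t ht h
    have := hmono h0 ht ht.1
    simp only [h, hA0, hB0] at this
    nlinarith [sub_pos.2 hlt]
  have hgt : ∀ t ∈ flowDomain T, 0 < A t - B t := by
    intro t ht
    by_contra hcon
    have hc : ContinuousOn (fun t => A t - B t) (flowDomain T) := fun s hs =>
      ((hA s hs).continuousWithinAt).sub ((hB s hs).continuousWithinAt)
    have hiv := hconv.isPreconnected.intermediate_value ht h0 hc
    obtain ⟨s, hs, hs0⟩ := hiv (show (0 : ℝ) ∈ _ from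
      ⟨not_lt.1 hcon, by simp only [hA0, hB0]; linarith⟩)
    exact hne s hs hs0
  intro t ht
  have hL := hconst (fun t => Real.log (D t) + Real.log (A t + B t) +
    (3 * k ^ 2) * (Real.log (A t - B t) - Real.log (A t + B t))) (by
      intro s hs
      obtain ⟨a, b, -, d⟩ := hpos s hs
      have g := hgt s hs
      have hs1 := ((hA s hs).add (hB s hs)).log (by simp only [Pi.add_apply]; positivity)
      have hs2 := ((hA s hs).sub (hB s hs)).log (by simp only [Pi.sub_apply]; exact g.ne')
      have hs3 := (hD s hs).log d.ne'
      refine ((hs3.add hs1).add ((hs2.sub hs1).const_mul (3 * k ^ 2))).congr_deriv ?_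
      simp only [Pi.add_apply, Pi.sub_apply]
      have g' := g.ne'
      have p : A s + B s ≠ 0 := by positivity
      field_simp
      ring) t ht
  obtain ⟨a, b, -, d⟩ := hpos t ht
  have g := hgt t ht
  have p : 0 < A t + B t := by positivity
  have g0 : 0 < lam1 - lam2 := sub_pos.2 hlt
  have p0 : 0 < lam1 + lam2 := by positivity
  have key : ∀ x y z : ℝ, 0 < x → 0 < y → 0 < z →
      Real.exp (Real.log x + Real.log y + (3 * k ^ 2) * (Real.log z - Real.log y))
        = x * y * (z / y) ^ (3 * k ^ 2) := by
    intro x y z hx hy hz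
    rw [Real.exp_add, Real.exp_add, Real.exp_log hx, Real.exp_log hy,
      Real.rpow_def_of_pos (by positivity), Real.log_div hz.ne' hy.ne', mul_comm (3 * k ^ 2)]
  have hE := congrArg Real.exp hL
  simp only [hA0, hB0, hD0] at hE
  rw [key _ _ _ d p g, key _ _ _ hlam4 p0 g0] at hE
  rw [← hAB t ht]
  refine ⟨by nlinarith, ?_⟩
  have hq : (A t ^ 2 + A t * B t) / (A t ^ 2 - A t * B t) = ((A t - B t) / (A t + B t))⁻¹ := by
    rw [inv_div, show A t ^ 2 + A t * B t = A t * (A t + B t) by ring,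
      show A t ^ 2 - A t * B t = A t * (A t - B t) by ring, mul_div_mul_left _ _ a.ne']
  rw [hq, Real.inv_rpow (by positivity)]
  have hr : 0 < ((A t - B t) / (A t + B t)) ^ (3 * k ^ 2) := Real.rpow_pos_of_pos (by positivity) _
  have hsq : 0 < Real.sqrt (A t * B t) := Real.sqrt_pos.2 (by positivity)
  generalize ((A t - B t) / (A t + B t)) ^ (3 * k ^ 2) = R at *
  generalize ((lam1 - lam2) / (lam1 + lam2)) ^ (3 * k ^ 2) = R0 at *
  generalize Real.sqrt (A t * B t) = S at *
  rw [show A t ^ 2 + A t * B t = A t * (A t + B t) by ring]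
  field_simp
  linarith
end

section
/- The functions A(t) = λ₁(1 − 3λ₂t/(λ₁λ₄))^{1/3}, B(t) = λ₂(1 − 3λ₂t/(λ₁λ₄))^{−1/3}, C(t) = λ₃, D(t) = λ₄(1 − 3λ₂t/(λ₁λ₄))^{1/3} are everywhere positive on [0, λ₁λ₄/(3λ₂)) and solve the backward Ricci flow system of class U1[2,1] with μ = 0 on that interval with the initial values A(0)=λ₁, B(0)=λ₂, C(0)=λ₃, D(0)=λ₄. -/
open Real Set

/-- Explicit solution coefficient `A` for class `U1[2,1]`, `μ = 0`. -/
noncomputable def A4 (lam1 lam2 lam4 t : ℝ) : ℝ :=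
  lam1 * (1 - 3 * lam2 * t / (lam1 * lam4)) ^ ((1 : ℝ) / 3)

/-- Explicit solution coefficient `B` for class `U1[2,1]`, `μ = 0`. -/
noncomputable def B4 (lam1 lam2 lam4 t : ℝ) : ℝ :=
  lam2 * (1 - 3 * lam2 * t / (lam1 * lam4)) ^ (-(1 : ℝ) / 3)

/-- Explicit solution coefficient `C` for class `U1[2,1]`, `μ = 0`. -/
noncomputable def C4 (lam3 : ℝ) (_t : ℝ) : ℝ := lam3

/-- Explicit solution coefficient `D` for class `U1[2,1]`, `μ = 0`. -/
noncomputable def D4 (lam1 lam2 lam4 t : ℝ) : ℝ :=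
  lam4 * (1 - 3 * lam2 * t / (lam1 * lam4)) ^ ((1 : ℝ) / 3)

/-- The explicit functions `A, B, C, D` above are everywhere positive on
`[0, λ₁λ₄/(3λ₂))` and solve the backward Ricci flow system of class `U1[2,1]` with `μ = 0`
(`A' = −B/D`, `B' = B²/(AD)`, `C' = 0`, `D' = −B/A`) there, with initial values
`A(0)=λ₁`, `B(0)=λ₂`, `C(0)=λ₃`, `D(0)=λ₄`. -/
theorem stmt4 (lam1 lam2 lam3 lam4 : ℝ)
    (hlam1 : 0 < lam1) (hlam2 : 0 < lam2) (hlam3 : 0 < lam3) (hlam4 : 0 < lam4) :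
    (∀ t ∈ Set.Ico (0 : ℝ) (lam1 * lam4 / (3 * lam2)),
      0 < A4 lam1 lam2 lam4 t ∧ 0 < B4 lam1 lam2 lam4 t ∧
      0 < C4 lam3 t ∧ 0 < D4 lam1 lam2 lam4 t) ∧
    (∀ t ∈ Set.Ico (0 : ℝ) (lam1 * lam4 / (3 * lam2)),
      HasDerivWithinAt (A4 lam1 lam2 lam4)
        (-(B4 lam1 lam2 lam4 t / D4 lam1 lam2 lam4 t))
        (Set.Ico (0 : ℝ) (lam1 * lam4 / (3 * lam2))) t ∧
      HasDerivWithinAt (B4 lam1 lam2 lam4)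
        (B4 lam1 lam2 lam4 t ^ 2 / (A4 lam1 lam2 lam4 t * D4 lam1 lam2 lam4 t))
        (Set.Ico (0 : ℝ) (lam1 * lam4 / (3 * lam2))) t ∧
      HasDerivWithinAt (C4 lam3) 0
        (Set.Ico (0 : ℝ) (lam1 * lam4 / (3 * lam2))) t ∧
      HasDerivWithinAt (D4 lam1 lam2 lam4)
        (-(B4 lam1 lam2 lam4 t / A4 lam1 lam2 lam4 t))
        (Set.Ico (0 : ℝ) (lam1 * lam4 / (3 * lam2))) t) ∧
    A4 lam1 lam2 lam4 0 = lam1 ∧ B4 lam1 lam2 lam4 0 = lam2 ∧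
    C4 lam3 0 = lam3 ∧ D4 lam1 lam2 lam4 0 = lam4 := by
  have key : ∀ t ∈ Set.Ico (0 : ℝ) (lam1 * lam4 / (3 * lam2)),
      0 < 1 - 3 * lam2 * t / (lam1 * lam4) := by
    intro t ht
    have h := ht.2
    rw [lt_div_iff₀ (by positivity)] at h
    rw [sub_pos, div_lt_one (by positivity)]
    linarith
  have hlin : ∀ t : ℝ, HasDerivAt (fun t : ℝ => 1 - 3 * lam2 * t / (lam1 * lam4))
      (-(3 * lam2 / (lam1 * lam4))) t := by
    intro t
    have h := (((hasDerivAt_id t).const_mul (3 * lam2)).div_const (lam1 * lam4)).const_sub 1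
    simpa using h
  refine ⟨?_, ?_, ?_, ?_, ?_, ?_⟩
  · intro t ht
    have hu := key t ht
    unfold A4 B4 C4 D4
    exact ⟨mul_pos hlam1 (Real.rpow_pos_of_pos hu _), mul_pos hlam2 (Real.rpow_pos_of_pos hu _),
      hlam3, mul_pos hlam4 (Real.rpow_pos_of_pos hu _)⟩
  · intro t ht
    have hu := key t ht
    have hd1 := (hlin t).rpow_const (p := (1 : ℝ) / 3) (Or.inl hu.ne')
    have hd2 := (hlin t).rpow_const (p := -(1 : ℝ) / 3) (Or.inl hu.ne')
    rw [Real.rpow_sub_one hu.ne'] at hd1 hd2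
    have hA := hd1.const_mul lam1
    have hB := hd2.const_mul lam2
    have hD := hd1.const_mul lam4
    unfold A4 B4 D4
    generalize 1 - 3 * lam2 * t / (lam1 * lam4) = u at *
    have hn : u ^ (-(1 : ℝ) / 3) = (u ^ ((1 : ℝ) / 3))⁻¹ := by
      rw [neg_div, Real.rpow_neg hu.le]
    have hc : u = (u ^ ((1 : ℝ) / 3)) ^ 3 := by
      rw [← Real.rpow_natCast, ← Real.rpow_mul hu.le]
      norm_num
    have hx : 0 < u ^ ((1 : ℝ) / 3) := Real.rpow_pos_of_pos hu _
    rw [hn] at hB ⊢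
    generalize u ^ ((1 : ℝ) / 3) = x at *
    subst hc
    refine ⟨(hA.congr_deriv ?_).hasDerivWithinAt, (hB.congr_deriv ?_).hasDerivWithinAt,
      hasDerivWithinAt_const _ _ _, (hD.congr_deriv ?_).hasDerivWithinAt⟩
    all_goals field_simp
  · simp [A4]
  · simp [B4]
  · rfl
  · simp [D4]
end

section
/- For every solution of the backward Ricci flow system of class U1[2,1] with μ = 1, the product AB is conserved, A(t)B(t) = λ₁λ₂ for all t ∈ [0,T), and moreover D(t) = Λ · A(t) · exp(3A(t)²/(2λ₁λ₂)) for all t ∈ [0,T), where Λ = (λ₄/λ₁) · exp(−3λ₁/(2λ₂)). -/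
open Real Set ENNReal

theorem flow_const (T : ℝ≥0∞) (F : ℝ → ℝ)
    (hF : ∀ t ∈ flowDomain T, HasDerivWithinAt F 0 (flowDomain T) t) :
    ∀ t ∈ flowDomain T, F t = F 0 := by
  intro t ht
  have hconv : Convex ℝ (flowDomain T) := by
    apply Set.OrdConnected.convex
    constructor
    intro x hx y hy z hz
    exact ⟨hx.1.trans hz.1, (ENNReal.ofReal_le_ofReal hz.2).trans_lt hy.2⟩
  have h0 : (0 : ℝ) ∈ flowDomain T :=
    ⟨le_rfl, (ENNReal.ofReal_le_ofReal ht.1).trans_lt ht.2⟩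
  have h := hconv.norm_image_sub_le_of_norm_hasDerivWithin_le (C := 0) hF
    (fun x _ => by simp) h0 ht
  rw [zero_mul] at h
  exact sub_eq_zero.mp (norm_le_zero_iff.mp h)

/-- For every solution of the backward Ricci flow system of class `U1[2,1]` with `μ = 1`,
the product `AB` is conserved, `A(t)B(t) = λ₁λ₂`, and
`D(t) = Λ · A(t) · exp(3A(t)²/(2λ₁λ₂))` where `Λ = (λ₄/λ₁) · exp(−3λ₁/(2λ₂))`. -/
theorem stmt5 (T : ℝ≥0∞) (hT : 0 < T)
    (lam1 lam2 lam3 lam4 : ℝ)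
    (hlam1 : 0 < lam1) (hlam2 : 0 < lam2) (hlam3 : 0 < lam3) (hlam4 : 0 < lam4)
    (A B C D : ℝ → ℝ)
    (hpos : ∀ t ∈ flowDomain T, 0 < A t ∧ 0 < B t ∧ 0 < C t ∧ 0 < D t)
    (hA : ∀ t ∈ flowDomain T,
      HasDerivWithinAt A (-(B t / D t)) (flowDomain T) t)
    (hB : ∀ t ∈ flowDomain T,
      HasDerivWithinAt B (B t ^ 2 / (A t * D t)) (flowDomain T) t)
    (hC : ∀ t ∈ flowDomain T,
      HasDerivWithinAt C 0 (flowDomain T) t)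
    (hD : ∀ t ∈ flowDomain T,
      HasDerivWithinAt D (-3 - B t / A t) (flowDomain T) t)
    (hA0 : A 0 = lam1) (hB0 : B 0 = lam2) (hC0 : C 0 = lam3) (hD0 : D 0 = lam4) :
    ∀ t ∈ flowDomain T,
      A t * B t = lam1 * lam2 ∧
      D t = (lam4 / lam1 * Real.exp (-(3 * lam1) / (2 * lam2))) * A t *
              Real.exp (3 * A t ^ 2 / (2 * (lam1 * lam2))) := by
  have h1 : ∀ t ∈ flowDomain T, A t * B t = lam1 * lam2 := by
    intro t ht
    have := flow_const T (fun s => A s * B s) (fun s hs => by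
      obtain ⟨a, b, -, d⟩ := hpos s hs
      refine ((hA s hs).mul (hB s hs)).congr_deriv ?_
      field_simp
      ring) t ht
    simpa [hA0, hB0] using this
  intro t ht
  refine ⟨h1 t ht, ?_⟩
  have h2 := flow_const T
    (fun s => Real.log (D s) - Real.log (A s) - 3 * A s ^ 2 / (2 * (lam1 * lam2)))
    (fun s hs => by
      obtain ⟨a, b, -, d⟩ := hpos s hs
      refine ((((hD s hs).log d.ne').sub ((hA s hs).log a.ne')).sub
        ((((hA s hs).pow 2).const_mul 3).div_const _)).congr_deriv ?_
      rw [← h1 s hs]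
      field_simp
      ring) t ht
  obtain ⟨a, b, -, d⟩ := hpos t ht
  simp only [hA0, hD0] at h2
  have h3 : 3 * lam1 ^ 2 / (2 * (lam1 * lam2)) = 3 * lam1 / (2 * lam2) := by
    field_simp
  rw [h3] at h2
  have h4 : Real.log (D t) = Real.log lam4 - Real.log lam1 + -(3 * lam1) / (2 * lam2)
      + Real.log (A t) + 3 * A t ^ 2 / (2 * (lam1 * lam2)) := by
    rw [neg_div]
    linarith
  rw [← Real.exp_log d, h4, Real.exp_add, Real.exp_add, Real.exp_add, Real.exp_sub,
    Real.exp_log hlam4, Real.exp_log hlam1, Real.exp_log a]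
end

section
/- Let T₀ = min{λ₁λ₄/(3λ₂), λ₂λ₄/(3λ₃)}. The functions A(t) = λ₁(1 − 3λ₂t/(λ₁λ₄))^{1/3}, B(t) = λ₂(1 − 3λ₂t/(λ₁λ₄))^{−1/3}(1 − 3λ₃t/(λ₂λ₄))^{1/3}, C(t) = λ₃(1 − 3λ₃t/(λ₂λ₄))^{−1/3}, D(t) = λ₄(1 − 3λ₂t/(λ₁λ₄))^{1/3}(1 − 3λ₃t/(λ₂λ₄))^{1/3} are everywhere positive on [0,T₀) and solve the backward Ricci flow system of class U1[3] on that interval with initial values A(0)=λ₁, B(0)=λ₂, C(0)=λ₃, D(0)=λ₄. -/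
open Real Set

/-- Explicit solution coefficient `A` for class `U1[3]` (`Nil⁴`). -/
noncomputable def A6 (lam1 lam2 lam4 t : ℝ) : ℝ :=
  lam1 * (1 - 3 * lam2 * t / (lam1 * lam4)) ^ ((1 : ℝ) / 3)

/-- Explicit solution coefficient `B` for class `U1[3]` (`Nil⁴`). -/
noncomputable def B6 (lam1 lam2 lam3 lam4 t : ℝ) : ℝ :=
  lam2 * (1 - 3 * lam2 * t / (lam1 * lam4)) ^ (-(1 : ℝ) / 3) *
    (1 - 3 * lam3 * t / (lam2 * lam4)) ^ ((1 : ℝ) / 3)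

/-- Explicit solution coefficient `C` for class `U1[3]` (`Nil⁴`). -/
noncomputable def C6 (lam2 lam3 lam4 t : ℝ) : ℝ :=
  lam3 * (1 - 3 * lam3 * t / (lam2 * lam4)) ^ (-(1 : ℝ) / 3)

/-- Explicit solution coefficient `D` for class `U1[3]` (`Nil⁴`). -/
noncomputable def D6 (lam1 lam2 lam3 lam4 t : ℝ) : ℝ :=
  lam4 * (1 - 3 * lam2 * t / (lam1 * lam4)) ^ ((1 : ℝ) / 3) *
    (1 - 3 * lam3 * t / (lam2 * lam4)) ^ ((1 : ℝ) / 3)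

/-- A cube-root factor: positivity, its inverse, and the two derivatives. -/
theorem aux_root6 (a b t : ℝ) (ha : 0 < a) (hb : 0 < b) (ht : t < b / (3 * a)) :
    ∃ u : ℝ, 0 < u ∧ (1 - 3 * a * t / b) ^ ((1 : ℝ) / 3) = u ∧
      (1 - 3 * a * t / b) ^ (-(1 : ℝ) / 3) = u⁻¹ ∧
      HasDerivAt (fun s : ℝ => (1 - 3 * a * s / b) ^ ((1 : ℝ) / 3)) (-(a / b) / u ^ 2) t ∧
      HasDerivAt (fun s : ℝ => (1 - 3 * a * s / b) ^ (-(1 : ℝ) / 3)) ((a / b) / u ^ 4) t := by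
  have hP : 0 < 1 - 3 * a * t / b := by
    rw [lt_div_iff₀ (by positivity)] at ht
    rw [sub_pos, div_lt_one hb]
    linarith
  have hlin : HasDerivAt (fun s : ℝ => 1 - 3 * a * s / b) (-(3 * a / b)) t := by
    have h := (((hasDerivAt_id t).const_mul (3 * a)).div_const b).const_sub 1
    simpa using h
  refine ⟨(1 - 3 * a * t / b) ^ ((1 : ℝ) / 3), Real.rpow_pos_of_pos hP _, rfl, ?_, ?_, ?_⟩
  · rw [← Real.rpow_neg hP.le]
    norm_num
  · have h := hlin.rpow_const (p := (1 : ℝ) / 3) (Or.inl hP.ne')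
    convert h using 1
    rw [← Real.rpow_mul_natCast hP.le, show (1 : ℝ) / 3 - 1 = -((1 : ℝ) / 3 * (2 : ℕ)) by norm_num,
      Real.rpow_neg hP.le]
    ring
  · have h := hlin.rpow_const (p := -(1 : ℝ) / 3) (Or.inl hP.ne')
    convert h using 1
    rw [← Real.rpow_mul_natCast hP.le, show -(1 : ℝ) / 3 - 1 = -((1 : ℝ) / 3 * (4 : ℕ)) by norm_num,
      Real.rpow_neg hP.le]
    ring

/-- With `T₀ = min{λ₁λ₄/(3λ₂), λ₂λ₄/(3λ₃)}`, the explicit functions `A, B, C, D` above are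
everywhere positive on `[0,T₀)` and solve the backward Ricci flow system of class `U1[3]`
(`A' = −B/D`, `B' = (B² − AC)/(AD)`, `C' = C²/(BD)`, `D' = −B/A − C/B`) on that interval,
with initial values `A(0)=λ₁`, `B(0)=λ₂`, `C(0)=λ₃`, `D(0)=λ₄`. -/
theorem stmt6 (lam1 lam2 lam3 lam4 : ℝ)
    (hlam1 : 0 < lam1) (hlam2 : 0 < lam2) (hlam3 : 0 < lam3) (hlam4 : 0 < lam4) :
    (∀ t ∈ Set.Ico (0 : ℝ) (min (lam1 * lam4 / (3 * lam2)) (lam2 * lam4 / (3 * lam3))),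
      0 < A6 lam1 lam2 lam4 t ∧ 0 < B6 lam1 lam2 lam3 lam4 t ∧
      0 < C6 lam2 lam3 lam4 t ∧ 0 < D6 lam1 lam2 lam3 lam4 t) ∧
    (∀ t ∈ Set.Ico (0 : ℝ) (min (lam1 * lam4 / (3 * lam2)) (lam2 * lam4 / (3 * lam3))),
      HasDerivWithinAt (A6 lam1 lam2 lam4)
        (-(B6 lam1 lam2 lam3 lam4 t / D6 lam1 lam2 lam3 lam4 t))
        (Set.Ico (0 : ℝ) (min (lam1 * lam4 / (3 * lam2)) (lam2 * lam4 / (3 * lam3)))) t ∧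
      HasDerivWithinAt (B6 lam1 lam2 lam3 lam4)
        ((B6 lam1 lam2 lam3 lam4 t ^ 2 - A6 lam1 lam2 lam4 t * C6 lam2 lam3 lam4 t) /
          (A6 lam1 lam2 lam4 t * D6 lam1 lam2 lam3 lam4 t))
        (Set.Ico (0 : ℝ) (min (lam1 * lam4 / (3 * lam2)) (lam2 * lam4 / (3 * lam3)))) t ∧
      HasDerivWithinAt (C6 lam2 lam3 lam4)
        (C6 lam2 lam3 lam4 t ^ 2 / (B6 lam1 lam2 lam3 lam4 t * D6 lam1 lam2 lam3 lam4 t))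
        (Set.Ico (0 : ℝ) (min (lam1 * lam4 / (3 * lam2)) (lam2 * lam4 / (3 * lam3)))) t ∧
      HasDerivWithinAt (D6 lam1 lam2 lam3 lam4)
        (-(B6 lam1 lam2 lam3 lam4 t / A6 lam1 lam2 lam4 t) -
          C6 lam2 lam3 lam4 t / B6 lam1 lam2 lam3 lam4 t)
        (Set.Ico (0 : ℝ) (min (lam1 * lam4 / (3 * lam2)) (lam2 * lam4 / (3 * lam3)))) t) ∧
    A6 lam1 lam2 lam4 0 = lam1 ∧ B6 lam1 lam2 lam3 lam4 0 = lam2 ∧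
    C6 lam2 lam3 lam4 0 = lam3 ∧ D6 lam1 lam2 lam3 lam4 0 = lam4 := by
  refine ⟨?_, ?_, ?_, ?_, ?_, ?_⟩
  · rintro t ⟨_, ht⟩
    obtain ⟨ht1, ht2⟩ := lt_min_iff.1 ht
    obtain ⟨u, hu, hu1, hu2, -, -⟩ := aux_root6 lam2 (lam1 * lam4) t hlam2 (by positivity) ht1
    obtain ⟨v, hv, hv1, hv2, -, -⟩ := aux_root6 lam3 (lam2 * lam4) t hlam3 (by positivity) ht2
    unfold A6 B6 C6 D6
    rw [hu1, hu2, hv1, hv2]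
    refine ⟨?_, ?_, ?_, ?_⟩ <;> positivity
  · rintro t ⟨_, ht⟩
    obtain ⟨ht1, ht2⟩ := lt_min_iff.1 ht
    obtain ⟨u, hu, hu1, hu2, hu3, hu4⟩ :=
      aux_root6 lam2 (lam1 * lam4) t hlam2 (by positivity) ht1
    obtain ⟨v, hv, hv1, hv2, hv3, hv4⟩ :=
      aux_root6 lam3 (lam2 * lam4) t hlam3 (by positivity) ht2
    have eA : A6 lam1 lam2 lam4 t = lam1 * u := by rw [A6, hu1]
    have eB : B6 lam1 lam2 lam3 lam4 t = lam2 * u⁻¹ * v := by rw [B6, hu2, hv1]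
    have eC : C6 lam2 lam3 lam4 t = lam3 * v⁻¹ := by rw [C6, hv2]
    have eD : D6 lam1 lam2 lam3 lam4 t = lam4 * u * v := by rw [D6, hu1, hv1]
    rw [eA, eB, eC, eD]
    refine ⟨?_, ?_, ?_, ?_⟩ <;> apply HasDerivAt.hasDerivWithinAt
    · refine (hu3.const_mul lam1).congr_deriv ?_
      field_simp
    · refine ((hu4.const_mul lam2).mul hv3).congr_deriv ?_
      simp only [hu2, hv1]
      field_simp
      try ring
    · refine (hv4.const_mul lam3).congr_deriv ?_
      field_simp
    · refine ((hu3.const_mul lam4).mul hv3).congr_deriv ?_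
      simp only [hu1, hv1]
      field_simp
      try ring
  all_goals simp [A6, B6, C6, D6]
end

section
/- For every solution of the backward Ricci flow system of class U3I0 (case (i)), the quantity BCD² is conserved, B(t)C(t)D(t)² = λ₂λ₃λ₄² for all t ∈ [0,T), and consequently D(t) = λ₄(1 − 3λ₄t/(λ₂λ₃))^{−1/3} for all t ∈ [0,T). -/
open Real Set ENNReal

theorem flowDomain_const (T : ℝ≥0∞) (f : ℝ → ℝ)
    (hf : ∀ t ∈ flowDomain T, HasDerivWithinAt f 0 (flowDomain T) t) :
    ∀ t ∈ flowDomain T, f t = f 0 := by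
  intro t ht
  have hc : Convex ℝ (flowDomain T) := by
    apply Set.OrdConnected.convex
    constructor
    rintro x ⟨hx, _⟩ y ⟨_, hy⟩ z ⟨h1, h2⟩
    exact ⟨hx.trans h1, (ENNReal.ofReal_le_ofReal h2).trans_lt hy⟩
  have h0 : (0 : ℝ) ∈ flowDomain T :=
    ⟨le_rfl, (ENNReal.ofReal_le_ofReal ht.1).trans_lt ht.2⟩
  have := hc.norm_image_sub_le_of_norm_hasDerivWithin_le (C := 0) hf (by simp) h0 ht
  simp only [zero_mul, norm_le_zero_iff] at this
  linarith

/-- For every solution of the backward Ricci flow system of class `U3I0`, case (i),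
the quantity `BCD²` is conserved, `B(t)C(t)D(t)² = λ₂λ₃λ₄²`, and consequently
`D(t) = λ₄(1 − 3λ₄t/(λ₂λ₃))^{−1/3}` for all `t ∈ [0,T)`. -/
theorem stmt7 (T : ℝ≥0∞) (hT : 0 < T)
    (lam1 lam2 lam3 lam4 : ℝ)
    (hlam1 : 0 < lam1) (hlam2 : 0 < lam2) (hlam3 : 0 < lam3) (hlam4 : 0 < lam4)
    (A B C D : ℝ → ℝ)
    (hpos : ∀ t ∈ flowDomain T, 0 < A t ∧ 0 < B t ∧ 0 < C t ∧ 0 < D t)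
    (hA : ∀ t ∈ flowDomain T,
      HasDerivWithinAt A (-(B t / C t) - C t / B t - 2) (flowDomain T) t)
    (hB : ∀ t ∈ flowDomain T,
      HasDerivWithinAt B (-(C t / A t) - D t / C t + B t ^ 2 / (A t * C t)) (flowDomain T) t)
    (hC : ∀ t ∈ flowDomain T,
      HasDerivWithinAt C (-(B t / A t) - D t / B t + C t ^ 2 / (A t * B t)) (flowDomain T) t)
    (hD : ∀ t ∈ flowDomain T,
      HasDerivWithinAt D (D t ^ 2 / (B t * C t)) (flowDomain T) t)
    (hA0 : A 0 = lam1) (hB0 : B 0 = lam2) (hC0 : C 0 = lam3) (hD0 : D 0 = lam4) :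
    ∀ t ∈ flowDomain T,
      B t * C t * D t ^ 2 = lam2 * lam3 * lam4 ^ 2 ∧
      D t = lam4 * (1 - 3 * lam4 * t / (lam2 * lam3)) ^ (-(1 : ℝ) / 3) := by
  have h1 : ∀ t ∈ flowDomain T, B t * C t * D t ^ 2 = lam2 * lam3 * lam4 ^ 2 := by
    intro t ht
    have := flowDomain_const T (fun t => B t * C t * D t ^ 2) (by
      intro s hs
      obtain ⟨a, b, c, d⟩ := hpos s hs
      refine (((hB s hs).mul (hC s hs)).mul ((hD s hs).pow 2)).congr_deriv ?_
      simp only [Pi.mul_apply, Pi.pow_apply]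
      field_simp
      ring) t ht
    simpa [hB0, hC0, hD0] using this
  intro t ht
  refine ⟨h1 t ht, ?_⟩
  have h2 := flowDomain_const T
    (fun t => (D t ^ 3)⁻¹ + t * (3 / (lam2 * lam3 * lam4 ^ 2))) (by
      intro s hs
      obtain ⟨a, b, c, d⟩ := hpos s hs
      refine ((((hD s hs).pow 3).inv (by simp only [Pi.pow_apply]; positivity)).add
        ((hasDerivWithinAt_id s (flowDomain T)).mul_const (3 / (lam2 * lam3 * lam4 ^ 2)))).congr_deriv ?_
      simp only [Pi.pow_apply]
      rw [← h1 s hs]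
      field_simp
      norm_num
      ring) t ht
  simp only [hD0, zero_mul, add_zero] at h2
  obtain ⟨a, b, c, d⟩ := hpos t ht
  have h3 : 1 - 3 * lam4 * t / (lam2 * lam3) = (D t / lam4) ^ (-3 : ℝ) := by
    have e : (D t / lam4) ^ (-3 : ℝ) = lam4 ^ 3 * (D t ^ 3)⁻¹ := by
      rw [Real.rpow_neg (by positivity)]
      norm_cast
      field_simp
    rw [e, eq_sub_of_add_eq h2]
    field_simp
  rw [h3, ← Real.rpow_mul (by positivity)]
  norm_num
  field_simp
end

section
/- For every solution of the backward Ricci flow system of class U3I0 (case (i)), the quantity AD(B−C) is conserved: A(t)D(t)(B(t)−C(t)) = λ₁λ₄(λ₂−λ₃) for all t ∈ [0,T). -/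
open Real Set ENNReal

/-- For every solution of the backward Ricci flow system of class `U3I0`, case (i),
the quantity `AD(B−C)` is conserved: `A(t)D(t)(B(t)−C(t)) = λ₁λ₄(λ₂−λ₃)` for all `t ∈ [0,T)`. -/
theorem stmt8 (T : ℝ≥0∞) (hT : 0 < T)
    (lam1 lam2 lam3 lam4 : ℝ)
    (hlam1 : 0 < lam1) (hlam2 : 0 < lam2) (hlam3 : 0 < lam3) (hlam4 : 0 < lam4)
    (A B C D : ℝ → ℝ)
    (hpos : ∀ t ∈ flowDomain T, 0 < A t ∧ 0 < B t ∧ 0 < C t ∧ 0 < D t)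
    (hA : ∀ t ∈ flowDomain T,
      HasDerivWithinAt A (-(B t / C t) - C t / B t - 2) (flowDomain T) t)
    (hB : ∀ t ∈ flowDomain T,
      HasDerivWithinAt B (-(C t / A t) - D t / C t + B t ^ 2 / (A t * C t)) (flowDomain T) t)
    (hC : ∀ t ∈ flowDomain T,
      HasDerivWithinAt C (-(B t / A t) - D t / B t + C t ^ 2 / (A t * B t)) (flowDomain T) t)
    (hD : ∀ t ∈ flowDomain T,
      HasDerivWithinAt D (D t ^ 2 / (B t * C t)) (flowDomain T) t)
    (hA0 : A 0 = lam1) (hB0 : B 0 = lam2) (hC0 : C 0 = lam3) (hD0 : D 0 = lam4) :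
    ∀ t ∈ flowDomain T,
      A t * D t * (B t - C t) = lam1 * lam4 * (lam2 - lam3) := by
  intro t ht
  have hsub : Icc 0 t ⊆ flowDomain T := fun x hx =>
    ⟨hx.1, lt_of_le_of_lt (ENNReal.ofReal_le_ofReal hx.2) ht.2⟩
  have key : ∀ x ∈ Icc 0 t,
      HasDerivWithinAt (fun s => A s * D s * (B s - C s)) 0 (Icc 0 t) x := by
    intro x hx
    have hx' := hsub hx
    obtain ⟨a, b, c, d⟩ := hpos x hx'
    have h := (((hA x hx').mul (hD x hx')).mul ((hB x hx').sub (hC x hx'))).mono hsub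
    refine h.congr_deriv ?_
    simp only [Pi.mul_apply, Pi.sub_apply]
    field_simp
    ring
  have := constant_of_derivWithin_zero (fun x hx => (key x hx).differentiableWithinAt)
    (fun x hx => (key x ⟨hx.1, hx.2.le⟩).derivWithin
      (uniqueDiffOn_Icc (lt_of_le_of_lt hx.1 hx.2) x ⟨hx.1, hx.2.le⟩)) t ⟨ht.1, le_rfl⟩
  simpa only [hA0, hB0, hC0, hD0] using this
end

section
/- Assume λ₂ = (1−α²)λ₃ and let T₀ = min{λ₁/4, λ₂²/(3(1−α²)λ₄)}. Then the functions A(t) = λ₁ − 4t, B(t) = (λ₂³ − 3(1−α²)λ₂λ₄t)^{1/3}, C(t) = (1−α²)^{−1}(λ₂³ − 3(1−α²)λ₂λ₄t)^{1/3}, D(t) = λ₂λ₄(λ₂³ − 3(1−α²)λ₂λ₄t)^{−1/3} are everywhere positive on [0,T₀) and solve the backward Ricci flow system of class U3I0, case (ii), on that interval with initial values A(0)=λ₁, B(0)=λ₂, C(0)=λ₃, D(0)=λ₄. -/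
open Real Set

/-- Explicit solution coefficient `A` for class `U3I0`, case (ii). -/
noncomputable def A11 (lam1 t : ℝ) : ℝ := lam1 - 4 * t

/-- Explicit solution coefficient `B` for class `U3I0`, case (ii). -/
noncomputable def B11 (α lam2 lam4 t : ℝ) : ℝ :=
  (lam2 ^ 3 - 3 * (1 - α ^ 2) * lam2 * lam4 * t) ^ ((1 : ℝ) / 3)

/-- Explicit solution coefficient `C` for class `U3I0`, case (ii). -/
noncomputable def C11 (α lam2 lam4 t : ℝ) : ℝ :=
  (1 - α ^ 2)⁻¹ * (lam2 ^ 3 - 3 * (1 - α ^ 2) * lam2 * lam4 * t) ^ ((1 : ℝ) / 3)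

/-- Explicit solution coefficient `D` for class `U3I0`, case (ii). -/
noncomputable def D11 (α lam2 lam4 t : ℝ) : ℝ :=
  lam2 * lam4 * (lam2 ^ 3 - 3 * (1 - α ^ 2) * lam2 * lam4 * t) ^ (-(1 : ℝ) / 3)

/-- Assume `λ₂ = (1−α²)λ₃` and let `T₀ = min{λ₁/4, λ₂²/(3(1−α²)λ₄)}`. Then the explicit
functions `A, B, C, D` above are everywhere positive on `[0,T₀)` and solve the backward
Ricci flow system of class `U3I0`, case (ii):
`A' = −(B² + 2(1+α²)BC + (1−α²)²C²)/(BC)`, `B' = (−AD + B² − (1−α²)²C²)/(AC)`,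
`C' = (−AD − B² + (1−α²)²C²)/(AB)`, `D' = D²/(BC)`,
with initial values `A(0)=λ₁`, `B(0)=λ₂`, `C(0)=λ₃`, `D(0)=λ₄`. -/
theorem stmt11 (α lam1 lam2 lam3 lam4 : ℝ)
    (hα₁ : -1 < α) (hα₂ : α < 1)
    (hlam1 : 0 < lam1) (hlam2 : 0 < lam2) (hlam3 : 0 < lam3) (hlam4 : 0 < lam4)
    (hrel : lam2 = (1 - α ^ 2) * lam3) :
    (∀ t ∈ Set.Ico (0 : ℝ) (min (lam1 / 4) (lam2 ^ 2 / (3 * (1 - α ^ 2) * lam4))),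
      0 < A11 lam1 t ∧ 0 < B11 α lam2 lam4 t ∧
      0 < C11 α lam2 lam4 t ∧ 0 < D11 α lam2 lam4 t) ∧
    (∀ t ∈ Set.Ico (0 : ℝ) (min (lam1 / 4) (lam2 ^ 2 / (3 * (1 - α ^ 2) * lam4))),
      HasDerivWithinAt (A11 lam1)
        (-((B11 α lam2 lam4 t ^ 2 +
            2 * (1 + α ^ 2) * (B11 α lam2 lam4 t * C11 α lam2 lam4 t) +
            (1 - α ^ 2) ^ 2 * C11 α lam2 lam4 t ^ 2) /
          (B11 α lam2 lam4 t * C11 α lam2 lam4 t)))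
        (Set.Ico (0 : ℝ) (min (lam1 / 4) (lam2 ^ 2 / (3 * (1 - α ^ 2) * lam4)))) t ∧
      HasDerivWithinAt (B11 α lam2 lam4)
        ((-(A11 lam1 t * D11 α lam2 lam4 t) + B11 α lam2 lam4 t ^ 2 -
            (1 - α ^ 2) ^ 2 * C11 α lam2 lam4 t ^ 2) /
          (A11 lam1 t * C11 α lam2 lam4 t))
        (Set.Ico (0 : ℝ) (min (lam1 / 4) (lam2 ^ 2 / (3 * (1 - α ^ 2) * lam4)))) t ∧
      HasDerivWithinAt (C11 α lam2 lam4)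
        ((-(A11 lam1 t * D11 α lam2 lam4 t) - B11 α lam2 lam4 t ^ 2 +
            (1 - α ^ 2) ^ 2 * C11 α lam2 lam4 t ^ 2) /
          (A11 lam1 t * B11 α lam2 lam4 t))
        (Set.Ico (0 : ℝ) (min (lam1 / 4) (lam2 ^ 2 / (3 * (1 - α ^ 2) * lam4)))) t ∧
      HasDerivWithinAt (D11 α lam2 lam4)
        (D11 α lam2 lam4 t ^ 2 / (B11 α lam2 lam4 t * C11 α lam2 lam4 t))
        (Set.Ico (0 : ℝ) (min (lam1 / 4) (lam2 ^ 2 / (3 * (1 - α ^ 2) * lam4)))) t) ∧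
    A11 lam1 0 = lam1 ∧ B11 α lam2 lam4 0 = lam2 ∧
    C11 α lam2 lam4 0 = lam3 ∧ D11 α lam2 lam4 0 = lam4 := by
  have hk : 0 < 1 - α ^ 2 := by nlinarith
  have hu : ∀ t ∈ Set.Ico (0 : ℝ) (min (lam1 / 4) (lam2 ^ 2 / (3 * (1 - α ^ 2) * lam4))),
      0 < lam1 - 4 * t ∧ 0 < lam2 ^ 3 - 3 * (1 - α ^ 2) * lam2 * lam4 * t := by
    rintro t ⟨-, ht⟩
    have h1 := lt_of_lt_of_le ht (min_le_left _ _)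
    have h2 := lt_of_lt_of_le ht (min_le_right _ _)
    rw [lt_div_iff₀ (by positivity)] at h2
    refine ⟨by linarith, ?_⟩
    have := mul_pos hlam2 (sub_pos.2 h2)
    nlinarith
  refine ⟨?_, ?_, ?_⟩
  · intro t ht
    obtain ⟨h1, h2⟩ := hu t ht
    unfold A11 B11 C11 D11
    have := Real.rpow_pos_of_pos h2 ((1 : ℝ) / 3)
    have := Real.rpow_pos_of_pos h2 (-(1 : ℝ) / 3)
    refine ⟨h1, ?_, ?_, ?_⟩ <;> positivity
  · intro t ht
    obtain ⟨h1, h2⟩ := hu t ht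
    have hd : HasDerivAt (fun t => lam2 ^ 3 - 3 * (1 - α ^ 2) * lam2 * lam4 * t)
        (-(3 * (1 - α ^ 2) * lam2 * lam4)) t := by
      simpa using ((hasDerivAt_id t).const_mul (3 * (1 - α ^ 2) * lam2 * lam4)).const_sub (lam2 ^ 3)
    have hA : HasDerivAt (A11 lam1) (-4) t := by
      unfold A11
      simpa using ((hasDerivAt_id t).const_mul (4 : ℝ)).const_sub lam1
    have hB := hd.rpow_const (p := (1 : ℝ) / 3) (Or.inl h2.ne')
    have hC := hB.const_mul ((1 - α ^ 2)⁻¹)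
    have hD := (hd.rpow_const (p := -(1 : ℝ) / 3) (Or.inl h2.ne')).const_mul (lam2 * lam4)
    have hb := Real.rpow_pos_of_pos h2 ((1 : ℝ) / 3)
    have e1 : (lam2 ^ 3 - 3 * (1 - α ^ 2) * lam2 * lam4 * t) ^ (-(1 : ℝ) / 3) =
        ((lam2 ^ 3 - 3 * (1 - α ^ 2) * lam2 * lam4 * t) ^ ((1 : ℝ) / 3))⁻¹ := by
      rw [← Real.rpow_neg h2.le]; norm_num
    have e2 : (lam2 ^ 3 - 3 * (1 - α ^ 2) * lam2 * lam4 * t) ^ ((1 : ℝ) / 3 - 1) =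
        (((lam2 ^ 3 - 3 * (1 - α ^ 2) * lam2 * lam4 * t) ^ ((1 : ℝ) / 3)) ^ 2)⁻¹ := by
      generalize lam2 ^ 3 - 3 * (1 - α ^ 2) * lam2 * lam4 * t = u at h2 ⊢
      rw [← Real.rpow_natCast, ← Real.rpow_mul h2.le, ← Real.rpow_neg h2.le]; norm_num
    have e4 : (lam2 ^ 3 - 3 * (1 - α ^ 2) * lam2 * lam4 * t) ^ (-(1 : ℝ) / 3 - 1) =
        (((lam2 ^ 3 - 3 * (1 - α ^ 2) * lam2 * lam4 * t) ^ ((1 : ℝ) / 3)) ^ 4)⁻¹ := by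
      generalize lam2 ^ 3 - 3 * (1 - α ^ 2) * lam2 * lam4 * t = u at h2 ⊢
      rw [← Real.rpow_natCast, ← Real.rpow_mul h2.le, ← Real.rpow_neg h2.le]; norm_num
    rw [e2] at hB hC
    rw [e4] at hD
    have hk' := hk.ne'
    have h1' := h1.ne'
    refine ⟨hA.hasDerivWithinAt.congr_deriv ?_, hB.hasDerivWithinAt.congr_deriv ?_,
      hC.hasDerivWithinAt.congr_deriv ?_, hD.hasDerivWithinAt.congr_deriv ?_⟩ <;>
    · unfold B11 C11
      try unfold A11
      try unfold D11
      try rw [e1]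
      generalize (lam2 ^ 3 - 3 * (1 - α ^ 2) * lam2 * lam4 * t) ^ ((1 : ℝ) / 3) = b at hb ⊢
      have hb' := hb.ne'
      field_simp
      try ring
  · have e : (lam2 ^ 3) ^ ((1 : ℝ) / 3) = lam2 := by
      rw [← Real.rpow_natCast, ← Real.rpow_mul hlam2.le]; norm_num
    have e' : (lam2 ^ 3) ^ (-(1 : ℝ) / 3) = lam2⁻¹ := by
      rw [← Real.rpow_natCast, ← Real.rpow_mul hlam2.le, ← Real.rpow_neg_one]; norm_num
    unfold A11 B11 C11 D11
    simp only [mul_zero, sub_zero, e, e']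
    refine ⟨trivial, trivial, ?_, ?_⟩
    · rw [hrel]; field_simp
    · field_simp
end

section
/- For every solution of the backward Ricci flow system of class U3S1, case (i), the following identities hold on [0,T): d/dt(AB) = −2(A+B+C), d/dt(AC) = 2(A−B−C), and d/dt(B(C−A)) = 4B. -/
open Real Set ENNReal

/-- For every solution of the backward Ricci flow system of class `U3S1`, case (i),
the identities `d/dt(AB) = −2(A+B+C)`, `d/dt(AC) = 2(A−B−C)` and `d/dt(B(C−A)) = 4B`
hold on `[0,T)`. -/
theorem stmt13 (T : ℝ≥0∞) (hT : 0 < T)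
    (lam1 lam2 lam3 : ℝ)
    (hlam1 : 0 < lam1) (hlam2 : 0 < lam2) (hlam3 : 0 < lam3)
    (A B C : ℝ → ℝ)
    (hpos : ∀ t ∈ flowDomain T, 0 < A t ∧ 0 < B t ∧ 0 < C t)
    (hA : ∀ t ∈ flowDomain T,
      HasDerivWithinAt A ((A t ^ 2 - (B t + C t) ^ 2) / (B t * C t)) (flowDomain T) t)
    (hB : ∀ t ∈ flowDomain T,
      HasDerivWithinAt B ((B t ^ 2 - (A t + C t) ^ 2) / (A t * C t)) (flowDomain T) t)
    (hC : ∀ t ∈ flowDomain T,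
      HasDerivWithinAt C ((C t ^ 2 - (A t - B t) ^ 2) / (A t * B t)) (flowDomain T) t)
    (hA0 : A 0 = lam1) (hB0 : B 0 = lam2) (hC0 : C 0 = lam3) :
    ∀ t ∈ flowDomain T,
      HasDerivWithinAt (fun s => A s * B s) (-2 * (A t + B t + C t)) (flowDomain T) t ∧
      HasDerivWithinAt (fun s => A s * C s) (2 * (A t - B t - C t)) (flowDomain T) t ∧
      HasDerivWithinAt (fun s => B s * (C s - A s)) (4 * B t) (flowDomain T) t := by
  intro t ht
  obtain ⟨ha, hb, hc⟩ := hpos t ht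
  have ha' := ha.ne'
  have hb' := hb.ne'
  have hc' := hc.ne'
  refine ⟨?_, ?_, ?_⟩
  · refine ((hA t ht).mul (hB t ht)).congr_deriv ?_
    field_simp
    ring
  · refine ((hA t ht).mul (hC t ht)).congr_deriv ?_
    field_simp
    ring
  · refine ((hB t ht).mul ((hC t ht).sub (hA t ht))).congr_deriv ?_
    simp only [Pi.sub_apply]
    field_simp
    ring
end

section
/- For every solution of the backward Ricci flow system of class U3S1, case (i), with A(0) ≥ B(0): A(t) ≥ B(t) for all t ∈ [0,T); and if moreover C(t₁) ≥ A(t₁) for some t₁ ∈ [0,T), then C(t) − A(t) ≥ C(t₁) − A(t₁) + 4(t − t₁) for all t ∈ [t₁,T); in particular the condition C ≥ A is preserved forward in time. -/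
open Real Set ENNReal

/-- Linear comparison: `u' ≥ g u` and `u a ≥ 0` imply `u ≥ 0`. -/
theorem aux_comparison (D : Set ℝ) (a b : ℝ) (hab : a ≤ b) (hD : Icc a b ⊆ D) (u u' g : ℝ → ℝ)
    (hu : ∀ t ∈ D, HasDerivWithinAt u (u' t) D t)
    (hg : ContinuousOn g (Icc a b))
    (hle : ∀ t ∈ Icc a b, g t * u t ≤ u' t) (ha : 0 ≤ u a) : 0 ≤ u b := by
  obtain ⟨K, hK⟩ := (isCompact_Icc.image_of_continuousOn hg).bddAbove
  have hK' : ∀ t ∈ Icc a b, g t ≤ K := fun t ht => hK (mem_image_of_mem g ht)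
  have key : ∀ ε : ℝ, 0 < ε → -u b ≤ ε * Real.exp ((K + 1) * (b - a)) := by
    intro ε hε
    have hd : ∀ x, HasDerivAt (fun t => ε * Real.exp ((K + 1) * (t - a)))
        (ε * (Real.exp ((K + 1) * (x - a)) * ((K + 1) * 1))) x := fun x =>
      ((((hasDerivAt_id x).sub_const a).const_mul (K + 1)).exp).const_mul ε
    refine image_le_of_deriv_right_lt_deriv_boundary (f := fun t => -u t) (f' := fun t => -u' t)
      (a := a) (b := b) (B := fun t => ε * Real.exp ((K + 1) * (t - a)))
      ?_ ?_ ?_ hd ?_ (right_mem_Icc.2 hab)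
    · intro x hx
      exact ((hu x (hD hx)).continuousWithinAt.mono hD).neg
    · intro x hx
      have h1 := (hu x (hD (Ico_subset_Icc_self hx))).mono
        ((Icc_subset_Icc_left hx.1).trans hD)
      exact (h1.mono_of_mem_nhdsWithin (Icc_mem_nhdsGE hx.2)).neg
    · simp only [sub_self, mul_zero, Real.exp_zero]
      linarith
    · intro x hx he
      have hx' := Ico_subset_Icc_self hx
      have hp : 0 < ε * Real.exp ((K + 1) * (x - a)) := by positivity
      have h1 := hle x hx'
      have h2 := hK' x hx'
      set E := ε * Real.exp ((K + 1) * (x - a)) with hE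
      have h3 : u x = -E := by linarith
      rw [h3] at h1
      have h4 : ε * (Real.exp ((K + 1) * (x - a)) * ((K + 1) * 1)) = (K + 1) * E := by
        rw [hE]; ring
      rw [h4]
      nlinarith
  by_contra hneg
  push Not at hneg
  have hE := Real.exp_pos ((K + 1) * (b - a))
  have := key (-u b / (2 * Real.exp ((K + 1) * (b - a))))
    (div_pos (by linarith) (by positivity))
  have h5 : -u b / (2 * Real.exp ((K + 1) * (b - a))) * Real.exp ((K + 1) * (b - a)) = -u b / 2 := by
    field_simp
  linarith

/-- For every solution of the backward Ricci flow system of class `U3S1`, case (i), with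
`A(0) ≥ B(0)`: one has `A(t) ≥ B(t)` on `[0,T)`; and if moreover `C(t₁) ≥ A(t₁)` for some
`t₁ ∈ [0,T)`, then `C(t) − A(t) ≥ C(t₁) − A(t₁) + 4(t − t₁)` for all `t ∈ [t₁,T)`; in
particular the condition `C ≥ A` is preserved forward in time. -/
theorem stmt14 (T : ℝ≥0∞) (hT : 0 < T)
    (lam1 lam2 lam3 : ℝ)
    (hlam2 : 0 < lam2) (hlam3 : 0 < lam3) (hge : lam2 ≤ lam1)
    (A B C : ℝ → ℝ)
    (hpos : ∀ t ∈ flowDomain T, 0 < A t ∧ 0 < B t ∧ 0 < C t)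
    (hA : ∀ t ∈ flowDomain T,
      HasDerivWithinAt A ((A t ^ 2 - (B t + C t) ^ 2) / (B t * C t)) (flowDomain T) t)
    (hB : ∀ t ∈ flowDomain T,
      HasDerivWithinAt B ((B t ^ 2 - (A t + C t) ^ 2) / (A t * C t)) (flowDomain T) t)
    (hC : ∀ t ∈ flowDomain T,
      HasDerivWithinAt C ((C t ^ 2 - (A t - B t) ^ 2) / (A t * B t)) (flowDomain T) t)
    (hA0 : A 0 = lam1) (hB0 : B 0 = lam2) (hC0 : C 0 = lam3) :
    (∀ t ∈ flowDomain T, B t ≤ A t) ∧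
    (∀ t₁ ∈ flowDomain T, A t₁ ≤ C t₁ →
      ∀ t ∈ flowDomain T, t₁ ≤ t →
        C t₁ - A t₁ + 4 * (t - t₁) ≤ C t - A t ∧ A t ≤ C t) := by
  have hsub : ∀ a b, a ∈ flowDomain T → b ∈ flowDomain T → Icc a b ⊆ flowDomain T := by
    intro a b ha hb x hx
    exact ⟨ha.1.trans hx.1, lt_of_le_of_lt (ENNReal.ofReal_le_ofReal hx.2) hb.2⟩
  have h0 : (0 : ℝ) ∈ flowDomain T := ⟨le_rfl, by simpa using hT⟩
  have cA : ContinuousOn A (flowDomain T) := fun t ht => (hA t ht).continuousWithinAt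
  have cB : ContinuousOn B (flowDomain T) := fun t ht => (hB t ht).continuousWithinAt
  have cC : ContinuousOn C (flowDomain T) := fun t ht => (hC t ht).continuousWithinAt
  have hne : ∀ t ∈ flowDomain T, A t * B t * C t ≠ 0 := by
    intro t ht
    obtain ⟨h1, h2, h3⟩ := hpos t ht
    positivity
  have part1 : ∀ t ∈ flowDomain T, B t ≤ A t := by
    intro t ht
    have := aux_comparison (flowDomain T) 0 t ht.1 (hsub 0 t h0 ht) (fun s => A s - B s) _
      (fun s => ((A s + B s) ^ 2 - C s ^ 2) / (A s * B s * C s))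
      (fun s hs => (hA s hs).sub (hB s hs))
      (ContinuousOn.mono (((cA.add cB).pow 2 |>.sub (cC.pow 2)).div ((cA.mul cB).mul cC) hne)
        (hsub 0 t h0 ht)) ?_ (by simp only [hA0, hB0]; linarith)
    · simpa using this
    · intro s hs
      obtain ⟨h1, h2, h3⟩ := hpos s (hsub 0 t h0 ht hs)
      apply le_of_eq
      field_simp
      ring
  refine ⟨part1, ?_⟩
  intro t₁ ht₁ hAC t ht htt
  have hs' := hsub t₁ t ht₁ ht
  have := aux_comparison (flowDomain T) t₁ t htt hs'
    (fun s => (C s - A s) - (C t₁ - A t₁ + 4 * (s - t₁))) 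
    (fun s => ((C s ^ 2 - (A s - B s) ^ 2) / (A s * B s) -
      (A s ^ 2 - (B s + C s) ^ 2) / (B s * C s)) - 4 * 1)
    (fun s => ((A s + C s) ^ 2 - B s ^ 2) / (A s * B s * C s))
    (fun s hs => ((hC s hs).sub (hA s hs)).sub
      (((((hasDerivAt_id s).sub_const t₁).const_mul 4).const_add _).hasDerivWithinAt))
    (ContinuousOn.mono (((cA.add cC).pow 2 |>.sub (cB.pow 2)).div ((cA.mul cB).mul cC) hne)
      hs') ?_ (by simp)
  · constructor <;> linarith
  · intro s hs
    obtain ⟨h1, h2, h3⟩ := hpos s (hs' hs)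
    have hBA := part1 s (hs' hs)
    have e : ((C s ^ 2 - (A s - B s) ^ 2) / (A s * B s) -
      (A s ^ 2 - (B s + C s) ^ 2) / (B s * C s)) - 4 * 1 =
      ((A s + C s) ^ 2 - B s ^ 2) / (A s * B s * C s) * (C s - A s) := by
      field_simp
      ring
    have hg : 0 ≤ ((A s + C s) ^ 2 - B s ^ 2) / (A s * B s * C s) := by
      apply div_nonneg _ (by positivity)
      nlinarith
    rw [e]
    apply mul_le_mul_of_nonneg_left _ hg
    linarith [hs.1]
end

section
/- For every solution of the backward Ricci flow system of class U3S3, the identity d/dt(A−B) = (A−B)((A+B)² − C²)/(ABC) holds on [0,T); consequently, if A(0) = B(0) then A(t) = B(t) for all t ∈ [0,T), and if A(0) > B(0) then A(t) > B(t) for all t ∈ [0,T). -/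
open Real Set ENNReal

theorem linear_ode_sol (t : ℝ) (ht : 0 ≤ t) (u g : ℝ → ℝ) (hg : ContinuousOn g (Icc 0 t))
    (hu : ∀ s ∈ Icc 0 t, HasDerivWithinAt u (u s * g s) (Icc 0 t) s) :
    ∃ k : ℝ, 0 < k ∧ u t = u 0 * k := by
  have hc : Continuous (IccExtend ht ((Icc 0 t).domRestrict g)) :=
    (continuousOn_iff_continuous_domRestrict.mp hg).Icc_extend'
  set h := IccExtend ht ((Icc 0 t).domRestrict g) with hh
  have hhg : ∀ s ∈ Icc 0 t, h s = g s := fun s hs => by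
    rw [hh, IccExtend_of_mem ht _ hs]; rfl
  let F : ℝ → ℝ := fun s => ∫ x in (0:ℝ)..s, h x
  have hF : ∀ s, HasDerivAt F (h s) s := fun s =>
    intervalIntegral.integral_hasDerivAt_right (hc.intervalIntegrable _ _)
      (hc.stronglyMeasurableAtFilter _ _) hc.continuousAt
  have hv : ∀ s ∈ Icc 0 t,
      HasDerivWithinAt (fun s => u s * Real.exp (-F s)) 0 (Icc 0 t) s := by
    intro s hs
    have h1 := (hu s hs).mul ((hF s).neg.exp.hasDerivWithinAt (s := Icc 0 t))
    refine h1.congr_deriv ?_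
    simp only [Pi.neg_apply]
    rw [hhg s hs]; ring
  have hconst := constant_of_derivWithin_zero
    (fun s hs => (hv s hs).differentiableWithinAt)
    (fun s hs => (hv s (Ico_subset_Icc_self hs)).derivWithin
      (uniqueDiffOn_Icc (lt_of_le_of_lt hs.1 hs.2) s (Ico_subset_Icc_self hs)))
    t (right_mem_Icc.mpr ht)
  have hF0 : F 0 = 0 := intervalIntegral.integral_same
  simp only [hF0, neg_zero, Real.exp_zero, mul_one] at hconst
  refine ⟨Real.exp (F t), Real.exp_pos _, ?_⟩
  rw [← hconst, mul_assoc, ← Real.exp_add]; simp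

/-- For every solution of the backward Ricci flow system of class `U3S3`, the identity
`d/dt(A−B) = (A−B)((A+B)² − C²)/(ABC)` holds on `[0,T)`; consequently, if `A(0) = B(0)`
then `A = B` on `[0,T)`, and if `A(0) > B(0)` then `A > B` on `[0,T)`. -/
theorem stmt16 (T : ℝ≥0∞) (hT : 0 < T)
    (lam1 lam2 lam3 : ℝ)
    (hlam1 : 0 < lam1) (hlam2 : 0 < lam2) (hlam3 : 0 < lam3)
    (A B C : ℝ → ℝ)
    (hpos : ∀ t ∈ flowDomain T, 0 < A t ∧ 0 < B t ∧ 0 < C t)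
    (hA : ∀ t ∈ flowDomain T,
      HasDerivWithinAt A ((A t ^ 2 - (B t - C t) ^ 2) / (B t * C t)) (flowDomain T) t)
    (hB : ∀ t ∈ flowDomain T,
      HasDerivWithinAt B ((B t ^ 2 - (A t - C t) ^ 2) / (A t * C t)) (flowDomain T) t)
    (hC : ∀ t ∈ flowDomain T,
      HasDerivWithinAt C ((C t ^ 2 - (A t - B t) ^ 2) / (A t * B t)) (flowDomain T) t)
    (hA0 : A 0 = lam1) (hB0 : B 0 = lam2) (hC0 : C 0 = lam3) :
    (∀ t ∈ flowDomain T,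
      HasDerivWithinAt (fun s => A s - B s)
        ((A t - B t) * ((A t + B t) ^ 2 - C t ^ 2) / (A t * B t * C t)) (flowDomain T) t) ∧
    (A 0 = B 0 → ∀ t ∈ flowDomain T, A t = B t) ∧
    (A 0 > B 0 → ∀ t ∈ flowDomain T, A t > B t) := by
  have key : ∀ t ∈ flowDomain T,
      HasDerivWithinAt (fun s => A s - B s)
        ((A t - B t) * ((A t + B t) ^ 2 - C t ^ 2) / (A t * B t * C t)) (flowDomain T) t := by
    intro t ht
    obtain ⟨h1, h2, h3⟩ := hpos t ht
    refine ((hA t ht).sub (hB t ht)).congr_deriv ?_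
    field_simp
    ring
  have sol : ∀ t ∈ flowDomain T, ∃ k : ℝ, 0 < k ∧ A t - B t = (A 0 - B 0) * k := by
    intro t ht
    have hsub : Icc 0 t ⊆ flowDomain T := fun s hs =>
      ⟨hs.1, lt_of_le_of_lt (ENNReal.ofReal_le_ofReal hs.2) ht.2⟩
    have cA : ContinuousOn A (Icc 0 t) := fun s hs =>
      ((hA s (hsub hs)).mono hsub).continuousWithinAt
    have cB : ContinuousOn B (Icc 0 t) := fun s hs =>
      ((hB s (hsub hs)).mono hsub).continuousWithinAt
    have cC : ContinuousOn C (Icc 0 t) := fun s hs =>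
      ((hC s (hsub hs)).mono hsub).continuousWithinAt
    refine linear_ode_sol t ht.1 (fun s => A s - B s)
      (fun s => ((A s + B s) ^ 2 - C s ^ 2) / (A s * B s * C s)) ?_ ?_
    · refine ContinuousOn.div (((cA.add cB).pow 2).sub (cC.pow 2)) ((cA.mul cB).mul cC) ?_
      intro s hs
      obtain ⟨h1, h2, h3⟩ := hpos s (hsub hs)
      positivity
    · intro s hs
      refine ((key s (hsub hs)).mono hsub).congr_deriv ?_
      simp only [mul_div_assoc]
  refine ⟨key, fun h t ht => ?_, fun h t ht => ?_⟩
  · obtain ⟨k, hk, e⟩ := sol t ht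
    rw [h, sub_self, zero_mul] at e
    linarith
  · obtain ⟨k, hk, e⟩ := sol t ht
    have := mul_pos (sub_pos.mpr h) hk
    linarith
end
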